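/- Let n = 2m and take C = {0,1}^{n−1} (the set of all binary words of length n−1), so that B(C) is the set of all words of length 2m−1 with weight m−1 or m. Then for every 1 ≤ i ≤ m, the number of words c ∈ B(C) with |Γ_C(c)| = i equals (2/i) · C(2i−2, i−1) · C(2m−2i, m−i), where C(a,b) denotes the binomial coefficient. -/

import Mathlib

/-- The Hamming weight of a binary word `x ∈ {0,1}^N`: the number of ones. -/
def wt {N : ℕ} (x : Fin N → Bool) : ℕ :=
  (Finset.univ.filter (fun i => x i = true)).card

/-- `Flip x j` complements the first `j` bits of `x`. -/
def Flip {N : ℕ} (x : Fin N → Bool) (j : ℕ) : Fin N → Bool :=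
  fun i => if (i : ℕ) < j then !(x i) else x i

/-- `cyc x i` is the cyclic right shift of `x` by `i` positions. -/
def cyc {N : ℕ} (x : Fin N → Bool) (i : ℕ) : Fin N → Bool :=
  fun j => x ⟨((j : ℕ) + (N - i % N)) % N, Nat.mod_lt _ j.pos⟩

/-- `j ∈ T_C(x)`: `j ∈ {0,…,n−2}` and `wt(Flip_c(σ(x,j))) ∈ {m−1, m}`,
where `Flip_c` complements the first `m` bits. -/
def TCmem (m : ℕ) (x : Fin (2*m-1) → Bool) (j : ℕ) : Prop :=
  j ≤ 2*m - 2 ∧ (wt (Flip (cyc x j) m) = m - 1 ∨ wt (Flip (cyc x j) m) = m)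

/-- `Γ_C(c)`: the set of shift indices `j ∈ {0,…,2m−2}` such that some `x ∈ C`
has `Flip_c(σ(x,j)) = c` and `min T_C(x) = j`. -/
def GammaC (m : ℕ) (C : Set (Fin (2*m-1) → Bool)) (c : Fin (2*m-1) → Bool) : Set ℕ :=
  {j | j ≤ 2*m - 2 ∧ ∃ x ∈ C, Flip (cyc x j) m = c ∧
    {j' | TCmem m x j'}.Nonempty ∧ sInf {j' | TCmem m x j'} = j}

/-!
Complete a middle-level word `c` by a closing bit to a word of length `2m` and weight `m`, and read
the pairs `(c t, c (m + t))` as the steps `c t + c (m + t) - 1 ∈ {-1, 0, 1}` of a lazy walk of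
length `m` on `ℤ`, which ends at `0`. Undoing `k ≤ m` of the shifts behind `c` lowers the weight by
twice the height of the walk at time `k`, so the word is again in a middle level exactly when the
walk is at `0`; hence `Γ_C(c) = {0, …, r - 1}`, where `r` is the first return time of the walk. (At
`k = m` the shifted word supplies the closing bit `!c 0`. It agrees with the actual one when
`r = m`, since an excursion keeps its sign and so starts and ends with opposite steps.)

Walks of length `j` that end at `0` number `C(2j, j)`. Cutting at the first return, the number `f i`
of first returns at time `i` satisfies the renewal equation `C(2n, n) = ∑ f i * C(2(n-i), n-i)` for
`n ≥ 1`, whose solution is `f (i + 1) = 2 * catalan i`.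
-/

open Finset

lemma card_subtype_eq_sum_card_of_existsUnique {β ι : Type*} [Finite β] {A : β → Prop}
    {B : β → ι → Prop} (t : Finset ι) (h : ∀ b, A b → ∃! i, i ∈ t ∧ B b i) :
    Nat.card {b // A b} = ∑ i ∈ t, Nat.card {b // A b ∧ B b i} := by
  classical
  have := Fintype.ofFinite β
  have hone : ∀ b ∈ univ.filter A, #(t.filter (B b)) = 1 := fun b hb => by
    rw [card_eq_one_iff_existsUnique]
    simpa only [mem_filter] using h b (mem_filter.1 hb).2
  simp only [Nat.card_eq_fintype_card, Fintype.card_subtype, ← filter_filter]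
  rw [card_eq_sum_ones, ← sum_congr rfl hone]
  exact sum_card_bipartiteAbove_eq_sum_card_bipartiteBelow B

lemma sum_toInt_eq_card {ι : Type*} [Fintype ι] (f : ι → Bool) :
    ∑ t, (f t).toInt = #{t | f t = true} := by
  rw [← sum_boole]
  exact sum_congr rfl fun t _ => by cases f t <;> rfl

lemma card_sum_toInt_eq (ι : Type*) [Fintype ι] (k : ℕ) :
    Nat.card {f : ι → Bool // ∑ t, (f t).toInt = k} = (Fintype.card ι).choose k := by
  classical
  simp only [sum_toInt_eq_card, Nat.cast_inj]
  rw [← Fintype.card_finset_len, ← Nat.card_eq_fintype_card]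
  exact Nat.card_congr
    { toFun := fun f => ⟨univ.filter fun t => f.1 t = true, f.2⟩
      invFun := fun S => ⟨fun t => decide (t ∈ S.1), by simp [S.2]⟩
      left_inv := fun f => by ext t; simp
      right_inv := fun S => by ext t; simp }

lemma eq_of_sum_antidiagonal_mul_eq {R : Type*} [NonUnitalNonAssocSemiring R] [IsLeftCancelAdd R]
    {a b u : ℕ → R} (hu : IsRightRegular (u 0))
    (h : ∀ n, ∑ ij ∈ antidiagonal n, a ij.1 * u ij.2 = ∑ ij ∈ antidiagonal n, b ij.1 * u ij.2) :
    a = b := by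
  funext n
  induction n using Nat.strong_induction_on with
  | _ n ih =>
    have hn := h n
    simp only [Nat.sum_antidiagonal_eq_sum_range_succ (fun i j => a i * u j),
      Nat.sum_antidiagonal_eq_sum_range_succ (fun i j => b i * u j), sum_range_succ,
      Nat.sub_self] at hn
    rw [sum_congr rfl fun i hi => by rw [ih i (mem_range.1 hi)]] at hn
    exact hu (add_left_cancel hn)

lemma sum_two_mul_catalan_mul_centralBinom (n : ℕ) :
    ∑ ij ∈ antidiagonal n, 2 * catalan ij.1 * ij.2.centralBinom = (n + 1).centralBinom := by
  have hswap : ∑ ij ∈ antidiagonal n, catalan ij.1 * ij.2.centralBinom =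
      ∑ ij ∈ antidiagonal n, catalan ij.2 * ij.1.centralBinom :=
    (Nat.sum_antidiagonal_swap (f := fun ij => catalan ij.1 * ij.2.centralBinom)).symm
  calc ∑ ij ∈ antidiagonal n, 2 * catalan ij.1 * ij.2.centralBinom
      = ∑ ij ∈ antidiagonal n, catalan ij.1 * ij.2.centralBinom +
          ∑ ij ∈ antidiagonal n, catalan ij.2 * ij.1.centralBinom := by
        rw [← hswap, ← two_mul, mul_sum]
        simp only [mul_assoc]
    _ = ∑ ij ∈ antidiagonal n, (n + 2) * (catalan ij.1 * catalan ij.2) := by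
        rw [← sum_add_distrib]
        refine sum_congr rfl fun ij hij => ?_
        rw [← mem_antidiagonal.1 hij, ← succ_mul_catalan_eq_centralBinom,
          ← succ_mul_catalan_eq_centralBinom]
        ring
    _ = (n + 1).centralBinom := by
        rw [← mul_sum, ← catalan_succ', succ_mul_catalan_eq_centralBinom]

lemma sum_range_shift_sub_sum_range {M : Type*} [AddCommGroup M] (f : ℕ → M) (m k : ℕ) :
    ∑ t ∈ range m, f (k + t) - ∑ t ∈ range m, f t = ∑ t ∈ range k, (f (m + t) - f t) := by
  have hcomm := sum_range_add f m k
  rw [add_comm m k, sum_range_add] at hcomm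
  rw [sum_sub_distrib, sub_eq_sub_iff_add_eq_add, add_comm, hcomm, add_comm]

lemma pos_iff_pos_of_forall_ne_zero {w : ℕ → ℤ} {a b : ℕ} (hab : a ≤ b)
    (hstep : ∀ k, a ≤ k → k < b → |w (k + 1) - w k| ≤ 1) (hne : ∀ k, a ≤ k → k ≤ b → w k ≠ 0) :
    0 < w a ↔ 0 < w b := by
  induction b, hab using Nat.le_induction with
  | base => rfl
  | succ b hab ih =>
    rw [ih (fun k hak hkb => hstep k hak (by omega)) fun k hak hkb => hne k hak (by omega)]
    have hstep_b := abs_le.1 (hstep b hab b.lt_succ_self)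
    have hne_b := hne b hab b.le_succ
    have hne_succ := hne (b + 1) (by omega) le_rfl
    omega

section FirstTime

/-- `i` is the first positive time at which `P` holds. Time `0` is left out because every process
considered here satisfies `P` at the start. -/
def IsFirstTime (P : ℕ → Prop) (i : ℕ) : Prop := IsLeast {k | 0 < k ∧ P k} i

variable {P Q : ℕ → Prop} {i : ℕ}

lemma exists_isFirstTime_le {n : ℕ} (hn : 0 < n) (h : P n) : ∃ i ≤ n, IsFirstTime P i := by
  classical
  have hex : ∃ k, 0 < k ∧ P k := ⟨n, hn, h⟩
  exact ⟨Nat.find hex, Nat.find_min' hex ⟨hn, h⟩, Nat.isLeast_find hex⟩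

lemma IsFirstTime.imp_of_forall_le (hP : IsFirstTime P i)
    (h : ∀ k, 0 < k → k ≤ i → (P k ↔ Q k)) : IsFirstTime Q i := by
  refine ⟨⟨hP.1.1, (h i hP.1.1 le_rfl).1 hP.1.2⟩, fun k ⟨hk, hQ⟩ => ?_⟩
  by_contra! hki
  exact hki.not_ge (hP.2 ⟨hk, (h k hk hki.le).2 hQ⟩)

lemma isFirstTime_congr (h : ∀ k, 0 < k → k ≤ i → (P k ↔ Q k)) :
    IsFirstTime P i ↔ IsFirstTime Q i :=
  ⟨fun hP => hP.imp_of_forall_le h,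
    fun hQ => hQ.imp_of_forall_le fun k hk hki => (h k hk hki).symm⟩

end FirstTime

section Walk

variable {α G : Type*} [AddCommMonoid G] (s : α → G) {n i j k : ℕ}

/-- The position after `k` steps of the walk that starts at `0` and whose `t`-th step is `s (p t)`;
it is constant from time `n` on. -/
def walk (p : Fin n → α) (k : ℕ) : G := ∑ t : Fin n with Fin.val t < k, s (p t)

lemma walk_self (p : Fin n → α) : walk s p n = ∑ t, s (p t) := by
  simp [walk]

lemma walk_eq_sum_range {p : Fin n → α} {g : ℕ → G} (hk : k ≤ n)
    (h : ∀ t : Fin n, (t : ℕ) < k → s (p t) = g t) : walk s p k = ∑ t ∈ range k, g t := by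
  obtain ⟨j, rfl⟩ := Nat.exists_eq_add_of_le hk
  have hlate (t : Fin j) : ¬ k + (t : ℕ) < k := by omega
  rw [walk, sum_congr rfl fun t ht => h t (mem_filter.1 ht).2, sum_filter, Fin.sum_univ_add,
    ← Fin.sum_univ_eq_sum_range]
  simp [hlate]

lemma walk_succ (p : Fin n → α) (hk : k < n) :
    walk s p (k + 1) = walk s p k + s (p ⟨k, hk⟩) := by
  let g (t : ℕ) : G := if h : t < n then s (p ⟨t, h⟩) else 0
  have hg (t : Fin n) : s (p t) = g t := by simp [g]
  rw [walk_eq_sum_range s hk fun t _ => hg t, walk_eq_sum_range s hk.le fun t _ => hg t,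
    sum_range_succ, ← hg ⟨k, hk⟩]

lemma walk_one (p : Fin n → α) (hn : 0 < n) : walk s p 1 = s (p ⟨0, hn⟩) := by
  rw [walk_succ s p hn]
  simp [walk]

lemma walk_append_left (q : Fin i → α) (r : Fin j → α) (hk : k ≤ i) :
    walk s (Fin.append q r) k = walk s q k := by
  have hlate (t : Fin j) : ¬ i + (t : ℕ) < k := by omega
  simp [walk, sum_filter, Fin.sum_univ_add, hlate]

lemma walk_append_add (q : Fin i → α) (r : Fin j → α) :
    walk s (Fin.append q r) (i + j) = walk s q i + walk s r j := by
  simp [walk_self, Fin.sum_univ_add]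

lemma card_walk_eq_zero_and_isFirstTime (i j : ℕ) :
    Nat.card {p : Fin (i + j) → α // walk s p (i + j) = 0 ∧ IsFirstTime (walk s p · = 0) i} =
      Nat.card {q : Fin i → α // IsFirstTime (walk s q · = 0) i} *
        Nat.card {r : Fin j → α // walk s r j = 0} := by
  rw [← Nat.card_prod]
  refine Nat.card_congr (Equiv.trans (Equiv.symm ?_) Equiv.subtypeProdEquivProd)
  refine (Fin.appendEquiv i j).subtypeEquiv fun ⟨q, r⟩ => ?_
  change _ ↔ walk s (Fin.append q r) (i + j) = 0 ∧ IsFirstTime (walk s (Fin.append q r) · = 0) i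
  have hfirst : IsFirstTime (walk s (Fin.append q r) · = 0) i ↔ IsFirstTime (walk s q · = 0) i :=
    isFirstTime_congr fun k _ hk => by rw [walk_append_left s q r hk]
  rw [hfirst, walk_append_add, and_comm]
  exact and_congr_left fun hq => by rw [hq.1.2, zero_add]

lemma card_walk_eq_zero_eq_sum_antidiagonal [Finite α] (hn : 0 < n) :
    Nat.card {p : Fin n → α // walk s p n = 0} =
      ∑ ij ∈ antidiagonal n, Nat.card {q : Fin ij.1 → α // IsFirstTime (walk s q · = 0) ij.1} *
        Nat.card {r : Fin ij.2 → α // walk s r ij.2 = 0} := by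
  have hunique (p : Fin n → α) (hp : walk s p n = 0) :
      ∃! ij, ij ∈ antidiagonal n ∧ IsFirstTime (walk s p · = 0) ij.1 := by
    obtain ⟨i, hin, hi⟩ := exists_isFirstTime_le (P := (walk s p · = 0)) hn hp
    refine ⟨(i, n - i), ⟨by simpa using Nat.add_sub_cancel' hin, hi⟩, fun ij ⟨hij, hi'⟩ => ?_⟩
    rw [← mem_antidiagonal.1 hij, hi.unique hi', Nat.add_sub_cancel_left]
  rw [card_subtype_eq_sum_card_of_existsUnique _ hunique]
  refine sum_congr rfl fun ij hij => ?_
  obtain rfl := mem_antidiagonal.1 hij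
  exact card_walk_eq_zero_and_isFirstTime s ij.1 ij.2

end Walk

section PairStep

/-- Half of the excess of ones over zeros in a pair of bits, so that `walk pairStep` is the lazy
simple random walk on `ℤ`. -/
def pairStep (a : Bool × Bool) : ℤ := a.1.toInt + a.2.toInt - 1

lemma card_walk_pairStep_eq_zero (n : ℕ) :
    Nat.card {p : Fin n → Bool × Bool // walk pairStep p n = 0} = n.centralBinom := by
  have h := card_sum_toInt_eq (Fin n ⊕ Fin n) n
  rw [Fintype.card_sum, Fintype.card_fin, ← two_mul, ← Nat.centralBinom_eq_two_mul_choose] at h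
  rw [← h]
  refine Nat.card_congr (((Equiv.arrowProdEquivProdArrow _ _ _).trans
    (Equiv.sumArrowEquivProdArrow _ _ _).symm).subtypeEquiv fun p => ?_)
  simp [walk_self, pairStep, sum_add_distrib, sub_eq_zero, Equiv.arrowProdEquivProdArrow]

lemma card_isFirstTime_walk_pairStep (i : ℕ) :
    Nat.card {q : Fin (i + 1) → Bool × Bool // IsFirstTime (walk pairStep q · = 0) (i + 1)} =
      2 * catalan i := by
  refine congrFun (eq_of_sum_antidiagonal_mul_eq (u := Nat.centralBinom)
    (a := fun i => Nat.card {q : Fin (i + 1) → Bool × Bool //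
      IsFirstTime (walk pairStep q · = 0) (i + 1)}) (b := fun i => 2 * catalan i)
    (IsRegular.of_ne_zero (Nat.centralBinom_ne_zero 0)).right fun n => ?_) i
  have hrenewal := card_walk_eq_zero_eq_sum_antidiagonal pairStep n.succ_pos
  have hzero : Nat.card {q : Fin 0 → Bool × Bool // IsFirstTime (walk pairStep q · = 0) 0} = 0 :=
    @Nat.card_of_isEmpty _ ⟨fun q => q.2.1.1.false⟩
  simp only [card_walk_pairStep_eq_zero, Nat.sum_antidiagonal_succ, hzero, zero_mul,
    zero_add] at hrenewal
  rw [← hrenewal, sum_two_mul_catalan_mul_centralBinom]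

lemma abs_pairStep_le_one (a : Bool × Bool) : |pairStep a| ≤ 1 := by
  revert a
  decide

/-- Before its first return the walk keeps its sign, so the first and the last step are opposite. -/
lemma IsFirstTime.snd_last_eq_not_fst_zero {n : ℕ} {p : Fin (n + 1) → Bool × Bool}
    (hp : IsFirstTime (walk pairStep p · = 0) (n + 1)) :
    (p (Fin.last n)).2 = !(p 0).1 := by
  have hend : walk pairStep p n + pairStep (p (Fin.last n)) = 0 :=
    (walk_succ pairStep p n.lt_succ_self).symm.trans hp.1.2
  have hne (k : ℕ) (hk : 1 ≤ k) (hkn : k ≤ n) : walk pairStep p k ≠ 0 := fun h =>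
    (Nat.lt_succ_of_le hkn).not_ge (hp.2 ⟨hk, h⟩)
  rcases Nat.eq_zero_or_pos n with rfl | hn
  · have hstep : pairStep (p 0) = 0 := by simpa [walk] using hend
    change (p 0).2 = !(p 0).1
    revert hstep
    generalize p 0 = a
    revert a
    decide
  · have hsign : 0 < walk pairStep p 1 ↔ 0 < walk pairStep p n := by
      refine pos_iff_pos_of_forall_ne_zero hn (fun k _ hkn => ?_) hne
      rw [walk_succ pairStep p (by omega), add_sub_cancel_left]
      exact abs_pairStep_le_one _
    have hstart : walk pairStep p 1 = pairStep (p 0) := walk_one pairStep p n.succ_pos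
    have hne_one := hne 1 le_rfl hn
    have hne_last := hne n hn le_rfl
    rw [eq_neg_of_add_eq_zero_left hend] at hsign hne_last
    rw [hstart] at hsign hne_one
    revert hsign hne_last hne_one
    generalize p 0 = a, p (Fin.last n) = b
    revert a b
    decide

end PairStep

section Rotation

variable {N : ℕ}

lemma Flip_Flip (x : Fin N → Bool) (j : ℕ) : Flip (Flip x j) j = x := by
  ext t
  unfold Flip
  split_ifs <;> simp

variable [NeZero N]

/-- The `N`-periodic sequence whose first period is the word `x`. -/
def periodicExt (x : Fin N → Bool) (t : ℕ) : Bool := x (Fin.ofNat N t)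

/-- The cyclic left shift of a word by `k` positions, which undoes the right shift `cyc`. -/
def rotateLeft (x : Fin N → Bool) (k : ℕ) : Fin N → Bool := fun t => periodicExt x (k + t)

lemma periodicExt_of_lt (x : Fin N → Bool) {t : ℕ} (ht : t < N) : periodicExt x t = x ⟨t, ht⟩ :=
  congrArg x (Fin.ext (Nat.mod_eq_of_lt ht))

lemma periodicExt_periodic (x : Fin N → Bool) : Function.Periodic (periodicExt x) N := fun t =>
  congrArg x (Fin.ext (Nat.add_mod_right t N))

lemma periodicExt_rotateLeft (x : Fin N → Bool) (k t : ℕ) :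
    periodicExt (rotateLeft x k) t = periodicExt x (k + t) :=
  congrArg x (Fin.ext (Nat.add_mod_mod k t N))

lemma rotateLeft_rotateLeft (x : Fin N → Bool) (j k : ℕ) :
    rotateLeft (rotateLeft x j) k = rotateLeft x (j + k) := by
  ext t
  rw [rotateLeft, periodicExt_rotateLeft, rotateLeft, add_assoc]

lemma rotateLeft_length (x : Fin N → Bool) : rotateLeft x N = x := by
  ext t
  rw [rotateLeft, add_comm, periodicExt_periodic, periodicExt_of_lt x t.2]

lemma cyc_eq_rotateLeft (x : Fin N → Bool) {j : ℕ} (hj : j < N) :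
    cyc x j = rotateLeft x (N - j) := by
  ext t
  simp only [cyc, Nat.mod_eq_of_lt hj, rotateLeft, add_comm (N - j)]
  rfl

lemma cyc_rotateLeft (x : Fin N → Bool) {j : ℕ} (hj : j < N) : cyc (rotateLeft x j) j = x := by
  rw [cyc_eq_rotateLeft _ hj, rotateLeft_rotateLeft, Nat.add_sub_cancel' hj.le, rotateLeft_length]

lemma rotateLeft_cyc (x : Fin N → Bool) {j k : ℕ} (hk : k ≤ j) (hj : j < N) :
    rotateLeft (cyc x j) k = cyc x (j - k) := by
  rw [cyc_eq_rotateLeft x hj, cyc_eq_rotateLeft x (by omega), rotateLeft_rotateLeft]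
  congr 1
  omega

lemma wt_eq_sum_range (x : Fin N → Bool) :
    (wt x : ℤ) = ∑ t ∈ range N, (periodicExt x t).toInt := by
  rw [wt, ← sum_toInt_eq_card, ← Fin.sum_univ_eq_sum_range]
  exact sum_congr rfl fun t _ => by rw [periodicExt_of_lt x t.2]

lemma wt_rotateLeft (x : Fin N → Bool) (k : ℕ) : wt (rotateLeft x k) = wt x := by
  rw [← Nat.cast_inj (R := ℤ), wt_eq_sum_range, wt_eq_sum_range, ← sub_eq_zero]
  simp only [periodicExt_rotateLeft]
  rw [sum_range_shift_sub_sum_range (fun t => (periodicExt x t).toInt)]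
  exact sum_eq_zero fun t _ => by rw [add_comm N t, periodicExt_periodic, sub_self]

lemma wt_Flip (x : Fin N → Bool) {m : ℕ} (hm : m ≤ N) :
    (wt (Flip x m) : ℤ) = wt x + ∑ t ∈ range m, (1 - 2 * (periodicExt x t).toInt) := by
  have hflip (t : ℕ) (ht : t < N) : (periodicExt (Flip x m) t).toInt =
      (periodicExt x t).toInt + if t < m then 1 - 2 * (periodicExt x t).toInt else 0 := by
    rw [periodicExt_of_lt _ ht, periodicExt_of_lt _ ht, Flip]
    cases x ⟨t, ht⟩ <;> split_ifs <;> rfl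
  rw [wt_eq_sum_range, wt_eq_sum_range, sum_congr rfl fun t ht => hflip t (mem_range.1 ht),
    sum_add_distrib, ← sum_filter]
  congr 2
  ext t
  simp only [mem_filter, mem_range]
  omega

lemma wt_Flip_rotateLeft (x : Fin N → Bool) {m : ℕ} (hm : m ≤ N) (k : ℕ) :
    (wt (Flip (rotateLeft x k) m) : ℤ) = wt (Flip x m) -
      2 * ∑ t ∈ range k, ((periodicExt x (m + t)).toInt - (periodicExt x t).toInt) := by
  rw [wt_Flip _ hm, wt_Flip _ hm, wt_rotateLeft,
    ← sum_range_shift_sub_sum_range (fun t => (periodicExt x t).toInt)]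
  simp only [periodicExt_rotateLeft, sum_sub_distrib, ← mul_sum]
  ring

end Rotation

section MiddleLevels

variable {m : ℕ}

/-- The word `c` lies in one of the two middle levels `m - 1` and `m` of `{0,1}^(2m-1)`; for
`C = {0,1}^(2m-1)` these words form `B(C)`. -/
abbrev IsMiddle (c : Fin (2 * m - 1) → Bool) : Prop := wt c = m - 1 ∨ wt c = m

/-- The sequence that starts with the word `c` and continues with the constant `b`. -/
def extendBy {N : ℕ} (c : Fin N → Bool) (b : Bool) (t : ℕ) : Bool :=
  if h : t < N then c ⟨t, h⟩ else b

/-- The pairs formed by the two halves of the word of length `2m` that consists of `c` and a closing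
bit `b`. -/
def zipHalves (c : Fin (2 * m - 1) → Bool) (b : Bool) : Fin m → Bool × Bool := fun t =>
  (extendBy c b t, extendBy c b (m + t))

lemma extendBy_of_lt {N : ℕ} (c : Fin N → Bool) (b : Bool) {t : ℕ} (ht : t < N) :
    extendBy c b t = c ⟨t, ht⟩ := dif_pos ht

lemma extendBy_of_le {N : ℕ} (c : Fin N → Bool) (b : Bool) {t : ℕ} (ht : N ≤ t) :
    extendBy c b t = b := dif_neg ht.not_gt

/-- `zipHalves` as a bijection between words with a closing bit and sequences of `m` pairs. -/
def zipHalvesEquiv (hm : 0 < m) : (Fin (2 * m - 1) → Bool) × Bool ≃ (Fin m → Bool × Bool) where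
  toFun cb := zipHalves cb.1 cb.2
  invFun p := (fun t => if h : t < m then (p ⟨t, h⟩).1 else (p ⟨t - m, by omega⟩).2,
    (p ⟨m - 1, by omega⟩).2)
  left_inv cb := by
    refine Prod.ext (funext fun t => ?_) (extendBy_of_le _ _ (by dsimp only; omega))
    by_cases ht : (t : ℕ) < m
    · simp [zipHalves, ht, extendBy_of_lt]
    · simp [zipHalves, ht, extendBy_of_lt, Nat.add_sub_cancel' (not_lt.1 ht)]
  right_inv p := by
    refine funext fun t => Prod.ext ?_ ?_
    · simp [zipHalves, extendBy, show (t : ℕ) < 2 * m - 1 by omega]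
    · rcases lt_or_ge (m + t) (2 * m - 1) with ht | ht
      · simp [zipHalves, extendBy_of_lt _ _ ht]
      · have hlast : (t : ℕ) = m - 1 := by omega
        simp [zipHalves, extendBy_of_le _ _ ht, ← hlast]

lemma walk_pairStep_zipHalves (c : Fin (2 * m - 1) → Bool) (b : Bool) {k : ℕ} (hk : k ≤ m) :
    walk pairStep (zipHalves c b) k =
      ∑ t ∈ range k, ((extendBy c b t).toInt + (extendBy c b (m + t)).toInt - 1) :=
  walk_eq_sum_range pairStep hk fun _ _ => rfl

lemma walk_pairStep_zipHalves_of_lt (c : Fin (2 * m - 1) → Bool) (b b' : Bool) {k : ℕ}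
    (hk : k < m) :
    walk pairStep (zipHalves c b) k = walk pairStep (zipHalves c b') k := by
  rw [walk_pairStep_zipHalves c b hk.le, walk_pairStep_zipHalves c b' hk.le]
  refine sum_congr rfl fun t ht => ?_
  have htk := mem_range.1 ht
  simp only [extendBy_of_lt c _ (show t < 2 * m - 1 by omega),
    extendBy_of_lt c _ (show m + t < 2 * m - 1 by omega)]

lemma wt_add_toInt_eq (hm : 0 < m) (c : Fin (2 * m - 1) → Bool) (b : Bool) :
    wt c + b.toInt = m + walk pairStep (zipHalves c b) m := by
  have hwt : (wt c : ℤ) = ∑ t ∈ range (2 * m - 1), (extendBy c b t).toInt := by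
    rw [wt, ← sum_toInt_eq_card, ← Fin.sum_univ_eq_sum_range]
    exact sum_congr rfl fun t _ => by rw [extendBy_of_lt c b t.2]
  have hclose : b.toInt = (extendBy c b (2 * m - 1)).toInt := by rw [extendBy_of_le c b le_rfl]
  rw [hwt, hclose, ← sum_range_succ (fun t => (extendBy c b t).toInt),
    show 2 * m - 1 + 1 = m + m by omega, sum_range_add, walk_pairStep_zipHalves c b le_rfl]
  simp [sum_sub_distrib, sum_add_distrib]

lemma walk_pairStep_zipHalves_eq_zero_iff (hm : 0 < m) (c : Fin (2 * m - 1) → Bool) (b : Bool) :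
    walk pairStep (zipHalves c b) m = 0 ↔ wt c + b.toInt = m := by
  rw [wt_add_toInt_eq hm c b, add_eq_left]

lemma isMiddle_iff_exists_toInt (hm : 0 < m) (c : Fin (2 * m - 1) → Bool) :
    IsMiddle c ↔ ∃ b : Bool, wt c + b.toInt = m := by
  simp only [Bool.exists_bool, Bool.toInt_false, Bool.toInt_true]
  omega

lemma card_isMiddle_and_eq (hm : 0 < m) (R : (Fin (2 * m - 1) → Bool) → Prop) :
    Nat.card {c : Fin (2 * m - 1) → Bool // IsMiddle c ∧ R c} =
      Nat.card {cb : (Fin (2 * m - 1) → Bool) × Bool // wt cb.1 + cb.2.toInt = m ∧ R cb.1} := by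
  symm
  refine Nat.card_eq_of_bijective
    (fun cb => ⟨cb.1.1, (isMiddle_iff_exists_toInt hm _).2 ⟨cb.1.2, cb.2.1⟩, cb.2.2⟩) ⟨?_, ?_⟩
  · rintro ⟨⟨c, b⟩, hb, _⟩ ⟨⟨c', b'⟩, hb', _⟩ h
    obtain rfl : c = c' := congrArg Subtype.val h
    have hbit : b.toInt = b'.toInt := add_left_cancel (hb.trans hb'.symm)
    cases b <;> cases b' <;> simp_all
  · rintro ⟨c, hc, hR⟩
    obtain ⟨b, hb⟩ := (isMiddle_iff_exists_toInt hm c).1 hc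
    exact ⟨⟨(c, b), hb, hR⟩, rfl⟩

instance [NeZero m] : NeZero (2 * m - 1) := ⟨by have := NeZero.pos m; omega⟩

/-- If `c = Flip_c(σ(x,j))`, this is `Flip_c(σ(x,j-k))` for `k ≤ j`. -/
def unshift [NeZero m] (c : Fin (2 * m - 1) → Bool) (k : ℕ) : Fin (2 * m - 1) → Bool :=
  Flip (rotateLeft (Flip c m) k) m

lemma unshift_Flip_cyc [NeZero m] (x : Fin (2 * m - 1) → Bool) {j k : ℕ} (hk : k ≤ j)
    (hj : j < 2 * m - 1) : unshift (Flip (cyc x j) m) k = Flip (cyc x (j - k)) m := by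
  rw [unshift, Flip_Flip, rotateLeft_cyc x hk hj]

lemma mem_GammaC_univ_iff [NeZero m] {c : Fin (2 * m - 1) → Bool} (hc : IsMiddle c) {j : ℕ} :
    j ∈ GammaC m Set.univ c ↔ j < 2 * m - 1 ∧ ∀ k, 0 < k → k ≤ j → ¬ IsMiddle (unshift c k) := by
  have hm := NeZero.pos m
  constructor
  · rintro ⟨hj, x, -, rfl, -, hmin⟩
    refine ⟨by omega, fun k hk hkj hmid => ?_⟩
    rw [unshift_Flip_cyc x hkj (by omega)] at hmid
    have hle : sInf {j' | TCmem m x j'} ≤ j - k := Nat.sInf_le ⟨by omega, hmid⟩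
    omega
  · rintro ⟨hj, h⟩
    obtain ⟨x, rfl⟩ : ∃ x, Flip (cyc x j) m = c :=
      ⟨rotateLeft (Flip c m) j, by rw [cyc_rotateLeft _ hj, Flip_Flip]⟩
    have hmem : TCmem m x j := ⟨by omega, hc⟩
    refine ⟨by omega, x, Set.mem_univ x, rfl, ⟨j, hmem⟩, IsLeast.csInf_eq ⟨hmem, fun k hk => ?_⟩⟩
    by_contra! hkj
    refine h (j - k) (by omega) (by omega) ?_
    rw [unshift_Flip_cyc x (by omega) hj, Nat.sub_sub_self hkj.le]
    exact hk.2

lemma GammaC_univ_eq_Iio [NeZero m] {c : Fin (2 * m - 1) → Bool} (hc : IsMiddle c) {r : ℕ}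
    (hr : IsFirstTime (fun k => IsMiddle (unshift c k)) r) (hrm : r ≤ 2 * m - 1) :
    GammaC m Set.univ c = Set.Iio r := by
  ext j
  rw [mem_GammaC_univ_iff hc, Set.mem_Iio]
  constructor
  · rintro ⟨-, h⟩
    by_contra! hrj
    exact h r hr.1.1 hrj hr.1.2
  · exact fun hj => ⟨by omega, fun k hk hkj hmid => (hkj.trans_lt hj).not_ge (hr.2 ⟨hk, hmid⟩)⟩

/-- With the closing bit `!c 0`, the second half of the extended word continues the periodic
sequence of `Flip c m`. -/
lemma wt_unshift [NeZero m] (c : Fin (2 * m - 1) → Bool) {k : ℕ} (hk : k ≤ m) :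
    (wt (unshift c k) : ℤ) = wt c - 2 * walk pairStep (zipHalves c (!c 0)) k := by
  have hm := NeZero.pos m
  have hfst (t : ℕ) (ht : t < m) :
      periodicExt (Flip c m) t = !extendBy c (!c 0) t := by
    rw [periodicExt_of_lt _ (by omega), extendBy_of_lt _ _ (by omega), Flip, if_pos ht]
  have hsnd (t : ℕ) (ht : t < m) :
      periodicExt (Flip c m) (m + t) = extendBy c (!c 0) (m + t) := by
    rcases lt_or_ge (m + t) (2 * m - 1) with hlt | hge
    · rw [periodicExt_of_lt _ hlt, extendBy_of_lt _ _ hlt, Flip, if_neg (by simp)]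
    · rw [extendBy_of_le _ _ hge, show m + t = 0 + (2 * m - 1) by omega, periodicExt_periodic,
        hfst 0 hm, extendBy_of_lt _ _ (by omega)]
      rfl
  rw [unshift, wt_Flip_rotateLeft _ (by omega), Flip_Flip, walk_pairStep_zipHalves _ _ hk]
  congr 2
  refine sum_congr rfl fun t ht => ?_
  have htm : t < m := (mem_range.1 ht).trans_le hk
  rw [hfst t htm, hsnd t htm]
  cases extendBy c (!c 0) t <;> simp

lemma isMiddle_unshift_iff [NeZero m] {c : Fin (2 * m - 1) → Bool} (hc : IsMiddle c) {k : ℕ}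
    (hk : k ≤ m) :
    IsMiddle (unshift c k) ↔ walk pairStep (zipHalves c (!c 0)) k = 0 := by
  have hwt := wt_unshift c hk
  omega

lemma eq_not_of_isFirstTime_walk_zipHalves [NeZero m] {c : Fin (2 * m - 1) → Bool} {b : Bool}
    (h : IsFirstTime (walk pairStep (zipHalves c b) · = 0) m) : b = !c 0 := by
  obtain ⟨n, rfl⟩ := Nat.exists_eq_add_of_le' (NeZero.pos m)
  have hlast := h.snd_last_eq_not_fst_zero
  simp only [zipHalves, Fin.val_last, Fin.val_zero] at hlast
  rwa [extendBy_of_le _ _ (by omega), extendBy_of_lt _ _ (by omega)] at hlast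

lemma IsFirstTime.isMiddle_unshift [NeZero m] {c : Fin (2 * m - 1) → Bool} {b : Bool}
    (hc : IsMiddle c) {r : ℕ} (hrm : r ≤ m)
    (hr : IsFirstTime (walk pairStep (zipHalves c b) · = 0) r) :
    IsFirstTime (fun k => IsMiddle (unshift c k)) r := by
  refine hr.imp_of_forall_le fun k _ hkr => ?_
  rw [isMiddle_unshift_iff hc (hkr.trans hrm)]
  rcases (hkr.trans hrm).lt_or_eq with hkm | rfl
  · rw [walk_pairStep_zipHalves_of_lt c _ _ hkm]
  · obtain rfl := hrm.antisymm hkr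
    rw [← eq_not_of_isFirstTime_walk_zipHalves hr]

lemma ncard_GammaC_univ_eq_iff [NeZero m] {c : Fin (2 * m - 1) → Bool} {b : Bool}
    (hcb : walk pairStep (zipHalves c b) m = 0) (i : ℕ) :
    (GammaC m Set.univ c).ncard = i ↔ IsFirstTime (walk pairStep (zipHalves c b) · = 0) i := by
  have hm := NeZero.pos m
  have hc : IsMiddle c :=
    (isMiddle_iff_exists_toInt hm c).2 ⟨b, (walk_pairStep_zipHalves_eq_zero_iff hm c b).1 hcb⟩
  obtain ⟨r, hrm, hr⟩ :=
    exists_isFirstTime_le (P := (walk pairStep (zipHalves c b) · = 0)) hm hcb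
  rw [GammaC_univ_eq_Iio hc (hr.isMiddle_unshift hc hrm) (by omega), ← coe_Iio,
    Set.ncard_coe_finset, Nat.card_Iio]
  exact ⟨fun hri => hri ▸ hr, hr.unique⟩

lemma card_isMiddle_and_ncard_GammaC_univ_eq (hm : 0 < m) (i : ℕ) :
    Nat.card {c : Fin (2 * m - 1) → Bool // IsMiddle c ∧ (GammaC m Set.univ c).ncard = i} =
      Nat.card {p : Fin m → Bool × Bool //
        walk pairStep p m = 0 ∧ IsFirstTime (walk pairStep p · = 0) i} := by
  have : NeZero m := ⟨hm.ne'⟩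
  rw [card_isMiddle_and_eq hm]
  refine Nat.card_congr ((zipHalvesEquiv hm).subtypeEquiv fun ⟨c, b⟩ => ?_)
  rw [← walk_pairStep_zipHalves_eq_zero_iff hm]
  exact and_congr_right fun hcb => ncard_GammaC_univ_eq_iff hcb i

end MiddleLevels

/-- with `C = {0,1}^{n−1}`, the number of words `c` of length
`2m−1` with weight `m−1` or `m` and `|Γ_C(c)| = i` is
`(2/i)·C(2i−2, i−1)·C(2m−2i, m−i)`. -/
theorem stmt18 (m : ℕ) (hm : 1 ≤ m) (i : ℕ) (hi1 : 1 ≤ i) (hi2 : i ≤ m) :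
    (Nat.card {c : Fin (2*m-1) → Bool //
        (wt c = m - 1 ∨ wt c = m) ∧ Set.ncard (GammaC m Set.univ c) = i} : ℝ)
      = (2 / (i : ℝ)) * (Nat.choose (2*i-2) (i-1)) * (Nat.choose (2*m-2*i) (m-i)) := by
  obtain ⟨k, rfl⟩ := Nat.exists_eq_add_of_le' hi1
  obtain ⟨j, rfl⟩ := Nat.exists_eq_add_of_le hi2
  rw [card_isMiddle_and_ncard_GammaC_univ_eq hm, card_walk_eq_zero_and_isFirstTime,
    card_isFirstTime_walk_pairStep, card_walk_pairStep_eq_zero]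
  have htop : 2 * (k + 1) - 2 = 2 * k := by omega
  have hrest : 2 * (k + 1 + j) - 2 * (k + 1) = 2 * j := by omega
  rw [Nat.add_sub_cancel, Nat.add_sub_cancel_left, htop, hrest,
    ← Nat.centralBinom_eq_two_mul_choose, ← Nat.centralBinom_eq_two_mul_choose,
    ← succ_mul_catalan_eq_centralBinom k]
  push_cast
  field_simp
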